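/- arXiv:2301.11547 — 7 statements merged into one kernel-verified Lean document; each statement's English description precedes it below -/
import Mathlib

section
/- Let (Ω, F, P) be a probability space with a filtration (F_k)_{k∈ℕ} and let (Φ(k))_{k∈ℕ} be an adapted real-valued stochastic process such that e^{ζΦ(0)} is integrable. Let ρ and ν_max be constants with 0 < ρ ≤ ν_max, let (φ_k)_{k∈ℕ} be a nondecreasing sequence of nonnegative reals, and set ζ = ρ/(ν_max² + ν_max·ρ/3). Assume for every k: (i) almost surely on the event {Φ(k) ≥ φ_k}, E[Φ(k+1) − Φ(k) | F_k] ≤ −ρ; and (ii) |Φ(k+1) − Φ(k)| ≤ ν_max almost surely. Then for every t ∈ ℕ, E[e^{ζΦ(t)}] ≤ E[e^{ζΦ(0)}] + (2/(ζρ))·e^{ζ(ν_max + φ_t)}. -/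
open MeasureTheory Real

/-!
Put `X = Φ (k+1) - Φ k` and `c = ζ νmax ≤ 1`. The choice of `ζ` says exactly that
`c ^ 2 / (1 - c / 3) = ζ ρ`, so the Bernstein estimate `exp y ≤ 1 + y + c ^ 2 / (2 (1 - c / 3))`
for `|y| ≤ c` (`exp_le_bernstein`) reads `exp (ζ X) ≤ 1 + ζ X + ζ ρ / 2`
(`exp_increment_le`). Multiplying by the `𝓕 k`-measurable weight
`Y = exp (ζ Φ k) 1_{Φ k ≥ φ k}`, integrating, and using the drift hypothesis in the form
`E[Y X] ≤ -ρ E[Y]` (`integral_mul_le_of_condExp_le`), while bounding `exp (ζ Φ (k+1))` by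
`exp (ζ (νmax + φ k))` off the event, gives the recursion
`E[exp (ζ Φ (k+1))] ≤ (1 - ζ ρ / 2) E[exp (ζ Φ k)] + exp (ζ (νmax + φ k))`.
The claimed bound is stable under this recursion because `φ` is nondecreasing.
-/

/-- Bernstein's estimate, with the condition `a = c ^ 2 / (1 - c / 3)` cleared of denominators. -/
lemma exp_le_bernstein {y c a : ℝ} (hy : |y| ≤ c) (hc : c ≤ 1)
    (ha : c ^ 2 = a * (1 - c / 3)) : Real.exp y ≤ 1 + y + a / 2 := by
  have hc0 : 0 ≤ c := (abs_nonneg y).trans hy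
  -- The fourth-order remainder constant `5 / 96` is below `1 / 18`, the coefficient of `c ^ 4` in
  -- the geometric expansion of `c ^ 2 / (2 (1 - c / 3))`.
  have h := Real.exp_bound (hy.trans hc) (n := 4) (by norm_num)
  norm_num [Finset.sum_range_succ, Nat.factorial] at h
  have h1 := (abs_le.mp h).2
  have h2 : y ^ 2 ≤ c ^ 2 := by
    rw [← sq_abs]; exact pow_le_pow_left₀ (abs_nonneg y) hy 2
  have h3 : y ^ 3 ≤ c ^ 3 := by
    have := pow_le_pow_left₀ (abs_nonneg y) hy 3
    rw [← abs_pow] at this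
    exact (le_abs_self _).trans this
  have h4 : |y| ^ 4 ≤ c ^ 4 := pow_le_pow_left₀ (abs_nonneg y) hy 4
  have h4' : y ^ 4 ≤ c ^ 4 := by
    rw [← abs_pow] at h4
    exact (le_abs_self _).trans h4
  have hc4 : 0 ≤ c ^ 4 := by positivity
  have ha0 : 0 ≤ a := by
    by_contra hneg
    nlinarith [sq_nonneg c]
  have hkey : c ^ 2 + c ^ 3 / 3 + c ^ 4 / 9 = a * (1 - c ^ 3 / 27) := by
    linear_combination (1 + c / 3 + c ^ 2 / 9) * ha
  have hac : 0 ≤ a * c ^ 3 := by positivity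
  nlinarith

lemma exp_increment_le {ρ ν ζ x : ℝ} (hρ : 0 < ρ) (hρν : ρ ≤ ν)
    (hζ : ζ = ρ / (ν ^ 2 + ν * ρ / 3)) (hx : |x| ≤ ν) :
    Real.exp (ζ * x) ≤ 1 + ζ * x + ζ * ρ / 2 := by
  have hν : 0 < ν := hρ.trans_le hρν
  have hD : 0 < ν ^ 2 + ν * ρ / 3 := by positivity
  have hζ0 : 0 < ζ := by rw [hζ]; positivity
  have hζD : ζ * (ν ^ 2 + ν * ρ / 3) = ρ := by rw [hζ]; field_simp
  refine exp_le_bernstein (c := ζ * ν) ?_ ?_ ?_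
  · rw [abs_mul, abs_of_pos hζ0]
    exact mul_le_mul_of_nonneg_left hx hζ0.le
  · have : 0 < ζ * (ν * ρ / 3) := by positivity
    by_contra hcon
    nlinarith
  · linear_combination ζ * hζD

/-- A bound on the conditional expectation that holds on the event `Y ≠ 0` integrates against the
nonnegative `m`-measurable weight `Y`. -/
lemma integral_mul_le_of_condExp_le {Ω : Type*} {m m0 : MeasurableSpace Ω} {μ : Measure Ω}
    [IsProbabilityMeasure μ] (hm : m ≤ m0) {X Y : Ω → ℝ} {r : ℝ}
    (hY : StronglyMeasurable[m] Y) (hYint : Integrable Y μ) (hX : Integrable X μ)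
    (hYX : Integrable (Y * X) μ) (hY0 : ∀ ω, 0 ≤ Y ω)
    (h : ∀ᵐ ω ∂μ, Y ω ≠ 0 → (μ[X | m]) ω ≤ r) :
    ∫ ω, Y ω * X ω ∂μ ≤ r * ∫ ω, Y ω ∂μ := by
  have hpull := condExp_mul_of_stronglyMeasurable_left hY hYX hX
  calc ∫ ω, Y ω * X ω ∂μ = ∫ ω, (μ[Y * X | m]) ω ∂μ := (integral_condExp hm).symm
    _ ≤ ∫ ω, r * Y ω ∂μ := by
        refine integral_mono_ae integrable_condExp (hYint.const_mul r) ?_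
        filter_upwards [hpull, h] with ω h1 h2
        rw [h1, Pi.mul_apply]
        by_cases h0 : Y ω = 0
        · simp [h0]
        · rw [mul_comm r]
          exact mul_le_mul_of_nonneg_left (h2 h0) (hY0 ω)
    _ = r * ∫ ω, Y ω ∂μ := integral_const_mul _ _

/-- Lyapunov-drift lemma: an adapted process with negative conditional drift above a
time-dependent threshold and uniformly bounded increments has bounded exponential moments. -/
theorem lyapunov_drift_exp_moment_bound
    {Ω : Type*} {m0 : MeasurableSpace Ω} {μ : Measure Ω} [IsProbabilityMeasure μ]
    (𝓕 : Filtration ℕ m0) (Φ : ℕ → Ω → ℝ) (hadapted : Adapted 𝓕 Φ)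
    (ρ νmax : ℝ) (hρ : 0 < ρ) (hρν : ρ ≤ νmax)
    (φ : ℕ → ℝ) (hφmono : Monotone φ) (hφnonneg : ∀ k, 0 ≤ φ k)
    (ζ : ℝ) (hζ : ζ = ρ / (νmax ^ 2 + νmax * ρ / 3))
    (hint : Integrable (fun ω => Real.exp (ζ * Φ 0 ω)) μ)
    (hdrift : ∀ k, ∀ᵐ ω ∂μ,
      Φ k ω ≥ φ k → (μ[(fun ω => Φ (k + 1) ω - Φ k ω) | 𝓕 k]) ω ≤ -ρ)
    (hbdd : ∀ k, ∀ᵐ ω ∂μ, |Φ (k + 1) ω - Φ k ω| ≤ νmax) :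
    ∀ t : ℕ, ∫ ω, Real.exp (ζ * Φ t ω) ∂μ ≤
      (∫ ω, Real.exp (ζ * Φ 0 ω) ∂μ) + (2 / (ζ * ρ)) * Real.exp (ζ * (νmax + φ t)) := by
  have hν : 0 < νmax := hρ.trans_le hρν
  have hζ0 : 0 < ζ := by rw [hζ]; positivity
  have hζρ : 0 < ζ * ρ := by positivity
  have hζρ1 : ζ * ρ ≤ 1 := by
    rw [hζ, div_mul_eq_mul_div, div_le_one (by positivity)]
    nlinarith [mul_pos hν hρ]
  have hmF : ∀ k, Measurable[𝓕 k] (Φ k) := fun k => hadapted k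
  have hm : ∀ k, Measurable (Φ k) := fun k => (hmF k).mono (𝓕.le k) le_rfl
  have hE : ∀ k, Integrable (fun ω => Real.exp (ζ * Φ k ω)) μ := by
    intro k
    induction k with
    | zero => exact hint
    | succ k ih =>
      refine (ih.const_mul (Real.exp (ζ * νmax))).mono'
        ((hm (k + 1)).const_mul ζ).exp.aestronglyMeasurable ?_
      filter_upwards [hbdd k] with ω hω
      rw [Real.norm_eq_abs, abs_of_pos (Real.exp_pos _), ← Real.exp_add]
      apply Real.exp_le_exp.mpr
      have := mul_le_mul_of_nonneg_left (abs_le.mp hω).2 hζ0.le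
      linarith
  have hrec : ∀ k, ∫ ω, Real.exp (ζ * Φ (k + 1) ω) ∂μ ≤
      (1 - ζ * ρ / 2) * (∫ ω, Real.exp (ζ * Φ k ω) ∂μ) + Real.exp (ζ * (νmax + φ k)) := by
    intro k
    set X : Ω → ℝ := fun ω => Φ (k + 1) ω - Φ k ω with hXdef
    set Y : Ω → ℝ := {ω | φ k ≤ Φ k ω}.indicator (fun ω => Real.exp (ζ * Φ k ω)) with hYdef
    have hsF : MeasurableSet[𝓕 k] {ω | φ k ≤ Φ k ω} := hmF k measurableSet_Ici
    have hXm : Measurable X := (hm (k + 1)).sub (hm k)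
    have hYF : StronglyMeasurable[𝓕 k] Y := by
      have h1 : Measurable[𝓕 k] (fun ω => Real.exp (ζ * Φ k ω)) :=
        Real.measurable_exp.comp ((hmF k).const_mul ζ)
      exact (h1.indicator hsF).stronglyMeasurable
    have hYint : Integrable Y μ := (hE k).indicator (𝓕.le k _ hsF)
    have hXb : ∀ᵐ ω ∂μ, ‖X ω‖ ≤ νmax := hbdd k
    have hX : Integrable X μ := Integrable.of_bound hXm.aestronglyMeasurable νmax hXb
    have hYX : Integrable (Y * X) μ := hYint.mul_bdd hXm.aestronglyMeasurable hXb
    have hY0 : ∀ ω, 0 ≤ Y ω := fun ω =>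
      Set.indicator_nonneg (fun _ _ => (Real.exp_pos _).le) ω
    have hYX_le : ∫ ω, Y ω * X ω ∂μ ≤ -ρ * ∫ ω, Y ω ∂μ := by
      refine integral_mul_le_of_condExp_le (𝓕.le k) hYF hYint hX hYX hY0 ?_
      filter_upwards [hdrift k] with ω hω hne
      exact hω (Set.mem_of_indicator_ne_zero (s := {ω | φ k ≤ Φ k ω}) hne)
    have hYE : ∫ ω, Y ω ∂μ ≤ ∫ ω, Real.exp (ζ * Φ k ω) ∂μ :=
      integral_mono hYint (hE k) fun ω =>
        Set.indicator_le_self' (fun _ _ => (Real.exp_pos _).le) ω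
    have hYX' : Integrable (fun ω => Y ω * X ω) μ := hYX
    have hi1 : Integrable (fun ω => (1 + ζ * ρ / 2) * Y ω) μ := hYint.const_mul _
    have hi2 : Integrable (fun ω => ζ * (Y ω * X ω)) μ := hYX'.const_mul _
    have hi3 : Integrable (fun ω => (1 + ζ * ρ / 2) * Y ω + ζ * (Y ω * X ω)) μ := hi1.add hi2
    have hstep : ∫ ω, Real.exp (ζ * Φ (k + 1) ω) ∂μ ≤
        ∫ ω, ((1 + ζ * ρ / 2) * Y ω + ζ * (Y ω * X ω) + Real.exp (ζ * (νmax + φ k))) ∂μ := by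
      refine integral_mono_ae (hE (k + 1)) (hi3.add (integrable_const _)) ?_
      filter_upwards [hbdd k] with ω hω
      have hpos := Real.exp_pos (ζ * (νmax + φ k))
      by_cases hmem : φ k ≤ Φ k ω
      · have hYω : Y ω = Real.exp (ζ * Φ k ω) :=
          Set.indicator_of_mem (s := {ω | φ k ≤ Φ k ω}) hmem _
        have hexp := mul_le_mul_of_nonneg_left (exp_increment_le hρ hρν hζ hω) (hY0 ω)
        have hsplit : Real.exp (ζ * Φ (k + 1) ω) =
            Y ω * Real.exp (ζ * (Φ (k + 1) ω - Φ k ω)) := by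
          rw [hYω, ← Real.exp_add]; congr 1; ring
        simp only [hsplit, hXdef]
        linarith
      · have hYω : Y ω = 0 := Set.indicator_of_notMem (s := {ω | φ k ≤ Φ k ω}) hmem _
        simp only [hYω, mul_zero, zero_mul, zero_add]
        apply Real.exp_le_exp.mpr
        apply mul_le_mul_of_nonneg_left _ hζ0.le
        have := (abs_le.mp hω).2
        linarith [not_le.mp hmem]
    rw [integral_add hi3 (integrable_const _), integral_add hi1 hi2, integral_const_mul,
      integral_const_mul, integral_const, probReal_univ, one_smul] at hstep
    have h1 := mul_le_mul_of_nonneg_left hYX_le hζ0.le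
    have h2 := mul_le_mul_of_nonneg_left hYE (show 0 ≤ 1 - ζ * ρ / 2 by linarith)
    linarith
  intro t
  induction t with
  | zero =>
    have : 0 ≤ 2 / (ζ * ρ) * Real.exp (ζ * (νmax + φ 0)) := by positivity
    linarith
  | succ k ih =>
    have hγ : 0 ≤ 1 - ζ * ρ / 2 := by linarith
    have h1 := mul_le_mul_of_nonneg_left ih hγ
    have hE0 : 0 ≤ ∫ ω, Real.exp (ζ * Φ 0 ω) ∂μ := integral_nonneg fun _ => (Real.exp_pos _).le
    have hmono : 2 / (ζ * ρ) * Real.exp (ζ * (νmax + φ k)) ≤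
        2 / (ζ * ρ) * Real.exp (ζ * (νmax + φ (k + 1))) := by
      gcongr
      exact hφmono (Nat.le_succ k)
    -- `2 / (ζ ρ)` is the fixed-point constant `1 / (1 - γ)` of the recursion with
    -- contraction factor `γ = 1 - ζ ρ / 2`.
    have hfix : (1 - ζ * ρ / 2) * (2 / (ζ * ρ) * Real.exp (ζ * (νmax + φ k))) +
        Real.exp (ζ * (νmax + φ k)) = 2 / (ζ * ρ) * Real.exp (ζ * (νmax + φ k)) := by
      field_simp
      ring
    have h2 := mul_nonneg hζρ.le hE0
    have h3 := hrec k
    rw [mul_add] at h1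
    linarith
end

section
/- Let (Ω, F, P) be a probability space with a filtration (F_k)_{k≥k₀} and let (λ_k)_{k≥k₀} be an adapted process of nonnegative real random variables with λ_{k₀} ≤ Λ almost surely for a deterministic constant Λ ≥ 0. Let H > 0 and 0 < ρ ≤ H, let (φ_k) be a nondecreasing sequence of nonnegative reals, and set ζ = ρ/(H² + H·ρ/3). Assume for every k ≥ k₀: (i) almost surely on the event {λ_k ≥ φ_k}, E[λ_{k+1} − λ_k | F_k] ≤ −ρ; and (ii) |λ_{k+1} − λ_k| ≤ H almost surely. Then for every K ≥ k₀, E[λ_{K+1}] ≤ (1/ζ)·log(11H²/(3ρ²)) + H + φ_{K+1} + Λ. -/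
/-!
The proof is an exponential-moment (Lyapunov drift) argument. With `ζ = ρ / (H² + Hρ/3)`, a
Bernstein-type estimate of the exponential gives `exp (ζx) ≤ 1 + ζx + ζρ/2` for `|x| ≤ H`
(`exp_le_bernstein`). On the event `{lam k ≥ φ k}` the drift condition turns this into contraction
of `exp (ζ lam k)` by the factor `1 - ζρ/2`, while off this event `lam (k+1) ≤ φ k + H`; hence
`E exp (ζ lam (k+1)) ≤ (1 - ζρ/2) E exp (ζ lam k) + exp (ζ (φ k + H))` (`exp_moment_step`).

With `C = exp (ζH) / (ζρ/2)`, the bound `E exp (ζ lam k) ≤ C exp (ζ (Λ + φ k))` is preserved by this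
recursion, because `(1 - ζρ/2) C + exp (ζH) = C`. Jensen's inequality and
`1 / (ζρ/2) = 2H(H + ρ/3)/ρ² ≤ 8H²/(3ρ²)` then give the result.
-/

open MeasureTheory Real

/-- Bernstein's estimate: the Taylor tail of the exponential from order two on is dominated by the
geometric series with sum `b² / (2 (1 - b/3))`. -/
lemma exp_le_bernstein_s1 {x b : ℝ} (hb : b ≤ 1) (hx : |x| ≤ b) :
    Real.exp x ≤ 1 + x + b ^ 2 / (2 * (1 - b / 3)) := by
  have hb0 : 0 ≤ b := (abs_nonneg x).trans hx
  -- Order four is needed: the remainder constant `5/96` is below the coefficient `1/18` of `b⁴`.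
  have h := Real.exp_bound (hx.trans hb) (n := 4) (by norm_num)
  have h1 := (abs_le.mp h).2
  simp only [Finset.sum_range_succ, Finset.sum_range_zero, Nat.factorial] at h1
  norm_num at h1
  have h2 : x ^ 2 ≤ b ^ 2 := by
    rw [← sq_abs x]; gcongr
  have h3 : x ^ 3 ≤ b ^ 3 := by
    calc x ^ 3 ≤ |x ^ 3| := le_abs_self _
      _ = |x| ^ 3 := abs_pow x 3
      _ ≤ b ^ 3 := by gcongr
  have h4 : |x| ^ 4 ≤ b ^ 4 := by gcongr
  have h5 : b ^ 2 / 2 + b ^ 3 / 6 + b ^ 4 / 18 ≤ b ^ 2 / (2 * (1 - b / 3)) := by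
    rw [le_div_iff₀ (by linarith)]
    nlinarith [pow_nonneg hb0 5]
  have h6 : 0 ≤ b ^ 4 := by positivity
  linarith

/-- One step of the drift recursion, for `c` a bound of the second-order part of the exponential. -/
lemma exp_moment_step {Ω : Type*} {m0 : MeasurableSpace Ω} {μ : Measure Ω} [IsProbabilityMeasure μ]
    {m : MeasurableSpace Ω} (hm : m ≤ m0) {X Y : Ω → ℝ} {H ρ ζ c p B : ℝ}
    (hX : StronglyMeasurable[m] X) (hY : StronglyMeasurable[m0] Y)
    (hXB : ∀ᵐ ω ∂μ, X ω ≤ B) (hζ : 0 < ζ)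
    (hc : 0 ≤ 1 + c - ζ * ρ)
    (hexp : ∀ x, |x| ≤ H → Real.exp (ζ * x) ≤ 1 + ζ * x + c)
    (hdrift : ∀ᵐ ω ∂μ, X ω ≥ p → (μ[(fun ω => Y ω - X ω) | m]) ω ≤ -ρ)
    (hbdd : ∀ᵐ ω ∂μ, |Y ω - X ω| ≤ H) :
    ∫ ω, Real.exp (ζ * Y ω) ∂μ ≤
      (1 + c - ζ * ρ) * ∫ ω, Real.exp (ζ * X ω) ∂μ + Real.exp (ζ * (p + H)) := by
  have hXm0 : StronglyMeasurable[m0] X := hX.mono hm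
  set A : Set Ω := {ω | p ≤ X ω} with hA
  have hAm : MeasurableSet[m] A := hX.measurable measurableSet_Ici
  set Z : Ω → ℝ := A.indicator (fun ω => Real.exp (ζ * X ω)) with hZ
  have hZm : StronglyMeasurable[m] Z :=
    (Real.continuous_exp.comp_stronglyMeasurable (hX.const_mul ζ)).indicator hAm
  have hZ0 : ∀ ω, 0 ≤ Z ω := fun ω => Set.indicator_nonneg (fun _ _ => (Real.exp_pos _).le) ω
  have hZle : ∀ ω, Z ω ≤ Real.exp (ζ * X ω) := fun ω =>
    Set.indicator_le_self' (fun _ _ => (Real.exp_pos _).le) ω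
  have hEX : Integrable (fun ω => Real.exp (ζ * X ω)) μ := by
    refine Integrable.of_bound
      (Real.continuous_exp.comp_stronglyMeasurable (hXm0.const_mul ζ)).aestronglyMeasurable
      (Real.exp (ζ * B)) ?_
    filter_upwards [hXB] with ω h
    rw [Real.norm_eq_abs, abs_of_pos (Real.exp_pos _)]
    gcongr
  have hEY : Integrable (fun ω => Real.exp (ζ * Y ω)) μ := by
    refine Integrable.of_bound
      (Real.continuous_exp.comp_stronglyMeasurable (hY.const_mul ζ)).aestronglyMeasurable
      (Real.exp (ζ * (B + H))) ?_
    filter_upwards [hXB, hbdd] with ω h h'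
    rw [Real.norm_eq_abs, abs_of_pos (Real.exp_pos _)]
    have := (abs_le.mp h').2
    gcongr
    linarith
  have hZi : Integrable Z μ := hEX.indicator (hm _ hAm)
  have hD : Integrable (fun ω => Y ω - X ω) μ :=
    Integrable.of_bound (hY.sub hXm0).aestronglyMeasurable H hbdd
  have hZD : Integrable (Z * fun ω => Y ω - X ω) μ := by
    have := hZi.mul_bdd (c := H) (hY.sub hXm0).aestronglyMeasurable hbdd
    exact this
  have hcond := condExp_mul_of_stronglyMeasurable_left (μ := μ) hZm hZD hD
  have hint : ∫ ω, Z ω * (Y ω - X ω) ∂μ ≤ -ρ * ∫ ω, Z ω ∂μ := by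
    have h1 : ∫ ω, Z ω * (Y ω - X ω) ∂μ
        = ∫ ω, (μ[(Z * fun ω => Y ω - X ω) | m]) ω ∂μ := (integral_condExp hm).symm
    rw [h1, ← integral_const_mul]
    refine integral_mono_ae integrable_condExp (hZi.const_mul _) ?_
    filter_upwards [hcond, hdrift] with ω h hd
    rw [h, Pi.mul_apply]
    by_cases hω : ω ∈ A
    · have := mul_le_mul_of_nonneg_left (hd hω) (hZ0 ω)
      linarith
    · simp [hZ, Set.indicator_of_notMem hω]
  have hpt : ∫ ω, Real.exp (ζ * Y ω) ∂μ ≤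
      ∫ ω, ((1 + c) * Z ω + ζ * (Z ω * (Y ω - X ω)) + Real.exp (ζ * (p + H))) ∂μ := by
    refine integral_mono_ae hEY
      (((hZi.const_mul _).add (hZD.const_mul ζ)).add (integrable_const _)) ?_
    filter_upwards [hbdd] with ω hb
    by_cases hω : ω ∈ A
    · have h1 : Real.exp (ζ * Y ω) = Z ω * Real.exp (ζ * (Y ω - X ω)) := by
        rw [hZ, Set.indicator_of_mem hω, ← Real.exp_add]; congr 1; ring
      have h2 := mul_le_mul_of_nonneg_left (hexp _ hb) (hZ0 ω)
      have h3 := Real.exp_pos (ζ * (p + H))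
      simp only [h1]
      linarith
    · have hlt : X ω < p := not_le.mp hω
      have h1 := (abs_le.mp hb).2
      have h2 : Z ω = 0 := Set.indicator_of_notMem hω _
      simp only [h2, mul_zero, zero_mul, zero_add]
      gcongr
      linarith
  have hi1 : Integrable (fun ω => (1 + c) * Z ω) μ := hZi.const_mul _
  have hi2 : Integrable (fun ω => ζ * (Z ω * (Y ω - X ω))) μ := hZD.const_mul ζ
  have hi3 : Integrable (fun ω => (1 + c) * Z ω + ζ * (Z ω * (Y ω - X ω))) μ := hi1.add hi2
  rw [integral_add hi3 (integrable_const _), integral_add hi1 hi2, integral_const_mul, integral_const_mul,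
    integral_const] at hpt
  simp only [probReal_univ, one_smul] at hpt
  have hZE : ∫ ω, Z ω ∂μ ≤ ∫ ω, Real.exp (ζ * X ω) ∂μ := integral_mono hZi hEX hZle
  have h1 := mul_le_mul_of_nonneg_left hint hζ.le
  have h2 := mul_le_mul_of_nonneg_left hZE hc
  linarith

/-- Expectation bound on the dual variable: a nonnegative adapted process starting (a.s.)
below `Λ`, with negative conditional drift `-ρ` above the nondecreasing thresholds `φ k`
and increments bounded by `H`, satisfies
`E[λ_{K+1}] ≤ (1/ζ) log(11 H² / (3 ρ²)) + H + φ_{K+1} + Λ`. -/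
theorem dual_variable_expectation_bound
    {Ω : Type*} {m0 : MeasurableSpace Ω} {μ : Measure Ω} [IsProbabilityMeasure μ]
    (k₀ : ℕ) (𝓕 : Filtration ℕ m0) (lam : ℕ → Ω → ℝ)
    (hadapted : ∀ k, k₀ ≤ k → StronglyMeasurable[𝓕 k] (lam k))
    (hnonneg : ∀ k, k₀ ≤ k → ∀ᵐ ω ∂μ, 0 ≤ lam k ω)
    (Λ : ℝ) (hΛ : 0 ≤ Λ) (hstart : ∀ᵐ ω ∂μ, lam k₀ ω ≤ Λ)
    (H ρ : ℝ) (hH : 0 < H) (hρ : 0 < ρ) (hρH : ρ ≤ H)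
    (φ : ℕ → ℝ) (hφmono : Monotone φ) (hφnonneg : ∀ k, 0 ≤ φ k)
    (ζ : ℝ) (hζ : ζ = ρ / (H ^ 2 + H * ρ / 3))
    (hdrift : ∀ k, k₀ ≤ k → ∀ᵐ ω ∂μ,
      lam k ω ≥ φ k → (μ[(fun ω => lam (k + 1) ω - lam k ω) | 𝓕 k]) ω ≤ -ρ)
    (hbdd : ∀ k, k₀ ≤ k → ∀ᵐ ω ∂μ, |lam (k + 1) ω - lam k ω| ≤ H) :
    ∀ K : ℕ, k₀ ≤ K → ∫ ω, lam (K + 1) ω ∂μ ≤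
      (1 / ζ) * Real.log (11 * H ^ 2 / (3 * ρ ^ 2)) + H + φ (K + 1) + Λ := by
  have hζ0 : 0 < ζ := by rw [hζ]; positivity
  have hζD : ζ * (H ^ 2 + H * ρ / 3) = ρ := by rw [hζ]; field_simp
  have hb1 : ζ * H ≤ 1 := by
    rw [hζ, div_mul_eq_mul_div, div_le_one (by positivity)]
    nlinarith [mul_pos hH hρ]
  have hζρ1 : ζ * ρ ≤ 1 := (mul_le_mul_of_nonneg_left hρH hζ0.le).trans hb1
  have hζρ : 0 < ζ * ρ := mul_pos hζ0 hρ
  -- This is the identity for which `ζ` is chosen.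
  have hc : (ζ * H) ^ 2 / (2 * (1 - ζ * H / 3)) = ζ * ρ / 2 := by
    rw [div_eq_div_iff (by linarith) two_ne_zero]
    linear_combination 2 * ζ * hζD
  have hexp : ∀ x, |x| ≤ H → Real.exp (ζ * x) ≤ 1 + ζ * x + ζ * ρ / 2 := by
    intro x hx
    rw [← hc]
    refine exp_le_bernstein_s1 hb1 ?_
    rw [abs_mul, abs_of_pos hζ0]
    gcongr
  have hsm : ∀ k, k₀ ≤ k → StronglyMeasurable[m0] (lam k) := fun k hk =>
    (hadapted k hk).mono (𝓕.le k)
  have hup : ∀ k, k₀ ≤ k → ∃ B : ℝ, ∀ᵐ ω ∂μ, lam k ω ≤ B := by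
    intro k hk
    induction k, hk using Nat.le_induction with
    | base => exact ⟨Λ, hstart⟩
    | succ k hk ih =>
      obtain ⟨B, hB⟩ := ih
      refine ⟨B + H, ?_⟩
      filter_upwards [hB, hbdd k hk] with ω h1 h2
      linarith [(abs_le.mp h2).2]
  set C : ℝ := Real.exp (ζ * H) / (ζ * ρ / 2) with hC
  have hC1 : 1 ≤ C := by
    rw [hC, le_div_iff₀ (by positivity)]
    linarith [Real.add_one_le_exp (ζ * H), mul_pos hζ0 hH]
  have hCeq : C * (ζ * ρ / 2) = Real.exp (ζ * H) := by
    rw [hC]; field_simp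
  have hEint : ∀ k, k₀ ≤ k → Integrable (fun ω => Real.exp (ζ * lam k ω)) μ := by
    intro k hk
    obtain ⟨B, hB⟩ := hup k hk
    refine Integrable.of_bound
      (Real.continuous_exp.comp_stronglyMeasurable ((hsm k hk).const_mul ζ)).aestronglyMeasurable
      (Real.exp (ζ * B)) ?_
    filter_upwards [hB] with ω h
    rw [Real.norm_eq_abs, abs_of_pos (Real.exp_pos _)]
    gcongr
  have hM : ∀ k, k₀ ≤ k → ∫ ω, Real.exp (ζ * lam k ω) ∂μ ≤ C * Real.exp (ζ * (Λ + φ k)) := by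
    intro k hk
    induction k, hk using Nat.le_induction with
    | base =>
      have h1 : ∫ ω, Real.exp (ζ * lam k₀ ω) ∂μ ≤ ∫ _, Real.exp (ζ * (Λ + φ k₀)) ∂μ := by
        refine integral_mono_ae (hEint k₀ le_rfl) (integrable_const _) ?_
        filter_upwards [hstart] with ω h
        have := hφnonneg k₀
        gcongr
        linarith
      rw [integral_const] at h1
      simp only [probReal_univ, one_smul] at h1
      exact h1.trans (le_mul_of_one_le_left (Real.exp_pos _).le hC1)
    | succ k hk ih =>
      obtain ⟨B, hB⟩ := hup k hk
      have hstep := exp_moment_step (𝓕.le k) (hadapted k hk) (hsm (k + 1) (by omega)) hB hζ0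
        (by linarith) hexp (hdrift k hk) (hbdd k hk)
      have h1 : Real.exp (ζ * (φ k + H)) ≤ Real.exp (ζ * H) * Real.exp (ζ * (Λ + φ k)) := by
        rw [← Real.exp_add]
        apply Real.exp_le_exp.mpr
        nlinarith [mul_nonneg hζ0.le hΛ]
      have h2 := mul_le_mul_of_nonneg_left ih (show 0 ≤ 1 + ζ * ρ / 2 - ζ * ρ by linarith)
      have h3 : C * Real.exp (ζ * (Λ + φ k)) ≤ C * Real.exp (ζ * (Λ + φ (k + 1))) := by
        have := hφmono (Nat.le_succ k)
        gcongr
      rw [← hCeq] at h1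
      linarith
  intro K hK
  have hK1 : k₀ ≤ K + 1 := by omega
  obtain ⟨B, hB⟩ := hup (K + 1) hK1
  have hLint : Integrable (lam (K + 1)) μ := by
    refine Integrable.of_bound (hsm _ hK1).aestronglyMeasurable B ?_
    filter_upwards [hB, hnonneg _ hK1] with ω h h0
    rwa [Real.norm_eq_abs, abs_of_nonneg h0]
  have hJ : Real.exp (∫ ω, ζ * lam (K + 1) ω ∂μ) ≤ ∫ ω, Real.exp (ζ * lam (K + 1) ω) ∂μ :=
    convexOn_exp.map_integral_le Real.continuous_exp.continuousOn isClosed_univ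
      (by simp) (hLint.const_mul ζ) (hEint _ hK1)
  rw [integral_const_mul] at hJ
  have hCle : C ≤ 11 * H ^ 2 / (3 * ρ ^ 2) * Real.exp (ζ * H) := by
    have : 1 / (ζ * ρ / 2) ≤ 11 * H ^ 2 / (3 * ρ ^ 2) := by
      rw [hζ, div_le_div_iff₀ (by positivity) (by positivity)]
      field_simp
      nlinarith [mul_pos hH hρ]
    calc C = 1 / (ζ * ρ / 2) * Real.exp (ζ * H) := by rw [hC]; ring
      _ ≤ _ := by gcongr
  have hL : 0 < 11 * H ^ 2 / (3 * ρ ^ 2) := by positivity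
  have hfin : Real.exp (ζ * ∫ ω, lam (K + 1) ω ∂μ) ≤
      Real.exp (Real.log (11 * H ^ 2 / (3 * ρ ^ 2)) + ζ * H + ζ * (Λ + φ (K + 1))) := by
    rw [Real.exp_add, Real.exp_add, Real.exp_log hL]
    refine hJ.trans ((hM _ hK1).trans ?_)
    gcongr
  have h := Real.exp_le_exp.mp hfin
  rw [← mul_le_mul_iff_right₀ hζ0]
  refine h.trans (le_of_eq ?_)
  field_simp
  ring
end

section
/- Let H > 0 and let τ, c₀ be reals with 0 ≤ c₀ < τ ≤ H. Let λ ≥ 0, η ≥ 0, and let ε satisfy 0 ≤ ε ≤ (τ − c₀)/2. Let V_r, V_c, W_r, W_c be reals with 0 ≤ V_r ≤ H, 0 ≤ V_c ≤ H, 0 ≤ W_r, and W_c ≤ c₀, and suppose the optimality inequality λ(V_c + ε − τ) − η·V_r ≤ λ(W_c + ε − τ) − η·W_r holds. Define λ' = max(0, λ + V_c + ε − τ). Then (λ')²/2 − λ²/2 ≤ −λ(τ − c₀)/2 + ηH + H² + ε². -/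
/-!
With `d = Vc + ε - τ`, dropping the projection gives a drift of at most `lam * d + d ^ 2 / 2`.
The linear term is controlled by optimality against the strictly feasible policy, and the
quadratic term by `|Vc - τ| ≤ H` together with `(a + b)² ≤ 2a² + 2b²`.
-/

/-- Quadratic Lyapunov-drift inequality for the dual update of the Safe PSRL algorithm. -/
theorem dual_update_quadratic_drift
    (H τ c₀ lam η ε Vr Vc Wr Wc : ℝ)
    (hH : 0 < H) (hc₀ : 0 ≤ c₀) (hc₀τ : c₀ < τ) (hτH : τ ≤ H)
    (hlam : 0 ≤ lam) (hη : 0 ≤ η) (hε0 : 0 ≤ ε) (hε : ε ≤ (τ - c₀) / 2)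
    (hVr0 : 0 ≤ Vr) (hVrH : Vr ≤ H) (hVc0 : 0 ≤ Vc) (hVcH : Vc ≤ H)
    (hWr : 0 ≤ Wr) (hWc : Wc ≤ c₀)
    (hopt : lam * (Vc + ε - τ) - η * Vr ≤ lam * (Wc + ε - τ) - η * Wr) :
    (max 0 (lam + Vc + ε - τ)) ^ 2 / 2 - lam ^ 2 / 2 ≤
      -lam * (τ - c₀) / 2 + η * H + H ^ 2 + ε ^ 2 := by
  -- Projecting onto `[0, ∞)` does not increase the square.
  have hmax : (max 0 (lam + Vc + ε - τ)) ^ 2 ≤ (lam + (Vc + ε - τ)) ^ 2 := by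
    rcases max_cases 0 (lam + Vc + ε - τ) with ⟨h, _⟩ | ⟨h, _⟩ <;> rw [h]
    · nlinarith [sq_nonneg (lam + (Vc + ε - τ))]
    · exact le_of_eq (by ring)
  -- The cross term is compared with the strictly feasible policy, whose slack
  -- `τ - c₀` loses at most half to the pessimism `ε`.
  have hW : lam * (Wc + ε - τ) ≤ lam * (-(τ - c₀) / 2) :=
    mul_le_mul_of_nonneg_left (by linarith) hlam
  have hηV : η * Vr ≤ η * H := mul_le_mul_of_nonneg_left hVrH hη
  have hηW : 0 ≤ η * Wr := mul_nonneg hη hWr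
  have hcross : lam * (Vc + ε - τ) ≤ -lam * (τ - c₀) / 2 + η * H := by
    linarith
  have hdev : (Vc - τ) ^ 2 ≤ H ^ 2 := sq_le_sq' (by linarith) (by linarith)
  -- `(a + b)² ≤ 2a² + 2b²` with `a = Vc - τ`, `b = ε`.
  have hsq : (Vc + ε - τ) ^ 2 ≤ 2 * H ^ 2 + 2 * ε ^ 2 := by
    nlinarith [sq_nonneg (Vc - τ - ε)]
  nlinarith
end

section
/- Let S, A, H be positive integers with S·A·H ≥ 3, let K ≥ 1 be a natural number, and for each k ≥ 1 define ε_k = 5·H^{3/2}·√(S²·A)·(log(k·S·A·H) + 1)/√(k·log(k·S·A·H)). Then Σ_{k=1}^{K} ε_k ≥ 10·H^{3/2}·√(S²·A·K·log(S·A·H·K)) − 10·H^{3/2}·√(S²·A·log(S·A·H)). -/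
open Finset

/-!
Write `c = SAH` and `g(x) = x log(xc)`. After removing the common factor `5 H^{3/2} √(S²A)`, the
summand is `g'(k) / √(g k)`, twice the derivative of `√g` at `k`. The increment of `√g` over
`[k, k+1]` is at most its derivative at `k` (`sqrt_step`): squaring, and using
`log(1 + 1/k) ≤ 1/k`, this reduces to `4L ≤ (L+1)²` with `L = log(kc)`. The sum therefore dominates
the telescoping sum of `2(√g(k+1) - √g(k))`, which is `2√g(K+1) - 2√g(1)`, and `g` is increasing.
-/

/-- The increment of `√(y log(yc))` over `[x, x + 1]` is at most its derivative at `y = x`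
(both sides doubled). -/
lemma sqrt_step (c x : ℝ) (hc : 1 < c) (hx : 1 ≤ x) :
    2 * Real.sqrt ((x + 1) * Real.log ((x + 1) * c)) - 2 * Real.sqrt (x * Real.log (x * c)) ≤
      (Real.log (x * c) + 1) / Real.sqrt (x * Real.log (x * c)) := by
  have hx0 : 0 < x := by linarith
  have hL : 0 < Real.log (x * c) := Real.log_pos (by nlinarith)
  have hlog : Real.log ((x + 1) * c) ≤ Real.log (x * c) + 1 / x := by
    have h1 : (x + 1) * c = (x * c) * (1 + 1 / x) := by field_simp
    rw [h1, Real.log_mul (by positivity) (by positivity)]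
    have := Real.log_le_sub_one_of_pos (show 0 < 1 + 1 / x by positivity)
    linarith
  set L := Real.log (x * c)
  have ha : 0 < x * L := by positivity
  have hs : 0 < Real.sqrt (x * L) := Real.sqrt_pos.2 ha
  have hsq : Real.sqrt (x * L) ^ 2 = x * L := Real.sq_sqrt ha.le
  set s := Real.sqrt (x * L)
  have key : Real.sqrt ((x + 1) * Real.log ((x + 1) * c)) ≤ s + (L + 1) / (2 * s) := by
    apply Real.sqrt_le_iff.2
    refine ⟨by positivity, ?_⟩
    have e1 : (s + (L + 1) / (2 * s)) ^ 2 = x * L + (L + 1) + (L + 1) ^ 2 / (4 * (x * L)) := by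
      rw [← hsq]
      field_simp
      ring
    have e2 : (x + 1) * (L + 1 / x) = x * L + (L + 1) + 1 / x := by
      field_simp
      ring
    have e3 : 1 / x ≤ (L + 1) ^ 2 / (4 * (x * L)) := by
      rw [div_le_div_iff₀ hx0 (by positivity)]
      nlinarith [mul_nonneg hx0.le (sq_nonneg (L - 1))]
    calc (x + 1) * Real.log ((x + 1) * c) ≤ (x + 1) * (L + 1 / x) := by gcongr
      _ ≤ _ := by rw [e1, e2]; linarith
  have e : (L + 1) / s = 2 * ((L + 1) / (2 * s)) := by field_simp
  rw [e]
  linarith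

/-- Telescoping `sqrt_step`. The left side involves `K + 1` rather than `K`, which is what lets the
induction close. -/
lemma sum_ge_telescope (c : ℝ) (hc : 1 < c) (K : ℕ) :
    2 * Real.sqrt (((K : ℝ) + 1) * Real.log (((K : ℝ) + 1) * c)) - 2 * Real.sqrt (Real.log c) ≤
      ∑ k ∈ Finset.Icc 1 K,
        (Real.log ((k : ℝ) * c) + 1) / Real.sqrt ((k : ℝ) * Real.log ((k : ℝ) * c)) := by
  induction K with
  | zero => simp
  | succ n ih =>
    rw [Finset.sum_Icc_succ_top (by omega)]
    have h := sqrt_step c ((n : ℝ) + 1) hc (by linarith [Nat.cast_nonneg (α := ℝ) n])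
    push_cast
    linarith

/-- Inequality (9) of the paper: the pessimism parameters
`ε_k = 5 H^{3/2} √(S²A) (log(kSAH)+1)/√(k log(kSAH))`
accumulate to at least `10 H^{3/2} √(S²A·K·log(SAHK))` minus a constant. -/
theorem pessimism_sum_lower_bound
    (S A H K : ℕ) (hS : 0 < S) (hA : 0 < A) (hH : 0 < H)
    (h3 : 3 ≤ S * A * H) (hK : 1 ≤ K) :
    ∑ k ∈ Finset.Icc 1 K,
        5 * (H : ℝ) ^ ((3 : ℝ) / 2) * Real.sqrt ((S : ℝ) ^ 2 * (A : ℝ)) *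
          (Real.log ((k : ℝ) * (S : ℝ) * (A : ℝ) * (H : ℝ)) + 1) /
            Real.sqrt ((k : ℝ) * Real.log ((k : ℝ) * (S : ℝ) * (A : ℝ) * (H : ℝ))) ≥
      10 * (H : ℝ) ^ ((3 : ℝ) / 2) *
          Real.sqrt ((S : ℝ) ^ 2 * (A : ℝ) * (K : ℝ) *
            Real.log ((S : ℝ) * (A : ℝ) * (H : ℝ) * (K : ℝ))) -
        10 * (H : ℝ) ^ ((3 : ℝ) / 2) *
          Real.sqrt ((S : ℝ) ^ 2 * (A : ℝ) * Real.log ((S : ℝ) * (A : ℝ) * (H : ℝ))) := by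
  have hc : (3 : ℝ) ≤ (S : ℝ) * A * H := by exact_mod_cast h3
  have hK1 : (1 : ℝ) ≤ K := by exact_mod_cast hK
  set c : ℝ := (S : ℝ) * A * H with hcdef
  have hsum := sum_ge_telescope c (by linarith) K
  have hmono : Real.sqrt ((K : ℝ) * Real.log (c * K)) ≤
      Real.sqrt (((K : ℝ) + 1) * Real.log (((K : ℝ) + 1) * c)) := by
    have h0 : 0 ≤ Real.log (c * K) := Real.log_nonneg (by nlinarith)
    have h1 : Real.log (c * K) ≤ Real.log (((K : ℝ) + 1) * c) :=
      Real.log_le_log (by positivity) (by nlinarith)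
    apply Real.sqrt_le_sqrt
    gcongr
    linarith
  have hB : (0 : ℝ) ≤ (S : ℝ) ^ 2 * A := by positivity
  have hfac : ∀ k : ℕ, (k : ℝ) * S * A * H = k * c := fun k => by rw [hcdef]; ring
  simp only [hfac, mul_div_assoc]
  rw [← Finset.mul_sum, mul_assoc _ (K : ℝ), Real.sqrt_mul hB, Real.sqrt_mul hB]
  have hC : 0 ≤ 5 * (H : ℝ) ^ ((3 : ℝ) / 2) * Real.sqrt ((S : ℝ) ^ 2 * A) := by positivity
  have h2 : 2 * Real.sqrt ((K : ℝ) * Real.log (c * K)) - 2 * Real.sqrt (Real.log c) ≤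
      ∑ k ∈ Finset.Icc 1 K,
        (Real.log ((k : ℝ) * c) + 1) / Real.sqrt ((k : ℝ) * Real.log ((k : ℝ) * c)) := by
    linarith
  have := mul_le_mul_of_nonneg_left h2 hC
  linarith
end

section
/- Let H > 0 and let τ, c₀ be reals with c₀ < τ. Let D ⊆ ℝ × ℝ be a convex set such that every (r, c) ∈ D satisfies 0 ≤ r ≤ H. Suppose (r*, c*) ∈ D with c* ≤ τ, and (r₀, γ₀) ∈ D with γ₀ ≤ c₀. Then for every ε with 0 ≤ ε ≤ τ − c₀, there exists (r', c') ∈ D with c' ≤ τ − ε and r* − r' ≤ ε·H/(τ − c₀). -/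
/-- Core of Lemma 5.5: in a convex set `D` of (reward, cost) pairs with rewards in `[0, H]`,
given a feasible point `(r*, c*)` with `c* ≤ τ` and a strictly feasible point with cost
at most `c₀ < τ`, for every `0 ≤ ε ≤ τ − c₀` there is a point of `D` with cost at most
`τ − ε` and reward within `ε·H/(τ − c₀)` of `r*`. -/
theorem tightened_constraint_reward_gap
    (H τ c₀ : ℝ) (hH : 0 < H) (hc : c₀ < τ)
    (D : Set (ℝ × ℝ)) (hconv : Convex ℝ D)
    (hbound : ∀ p ∈ D, 0 ≤ p.1 ∧ p.1 ≤ H)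
    (rstar cstar : ℝ) (hstar : (rstar, cstar) ∈ D) (hcstar : cstar ≤ τ)
    (r₀ γ₀ : ℝ) (h0 : (r₀, γ₀) ∈ D) (hγ₀ : γ₀ ≤ c₀)
    (ε : ℝ) (hε0 : 0 ≤ ε) (hε : ε ≤ τ - c₀) :
    ∃ p ∈ D, p.2 ≤ τ - ε ∧ rstar - p.1 ≤ ε * H / (τ - c₀) := by
  have hd : 0 < τ - c₀ := sub_pos.mpr hc
  -- The mixture of the two points with weight `t = ε / (τ - c₀)` on the strictly feasible one
  -- has cost at most `(1 - t) τ + t c₀ = τ - ε` and loses reward `t (rstar - r₀) ≤ t H`.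
  obtain ⟨t, ht⟩ : ∃ t, t = ε / (τ - c₀) := ⟨_, rfl⟩
  have ht0 : 0 ≤ t := ht ▸ div_nonneg hε0 hd.le
  have ht1 : t ≤ 1 := ht ▸ (div_le_one hd).mpr hε
  have htε : t * (τ - c₀) = ε := by rw [ht, div_mul_cancel₀ _ hd.ne']
  refine ⟨(1 - t) • (rstar, cstar) + t • (r₀, γ₀),
    hconv hstar h0 (sub_nonneg.mpr ht1) ht0 (by ring), ?_, ?_⟩
  · simp only [Prod.snd_add, Prod.smul_snd, smul_eq_mul]
    have h1 := mul_le_mul_of_nonneg_left hcstar (sub_nonneg.mpr ht1)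
    have h2 := mul_le_mul_of_nonneg_left hγ₀ ht0
    linarith
  · have hgap : rstar - r₀ ≤ H := by
      linarith [(hbound _ hstar).2, (hbound _ h0).1]
    have h1 := mul_le_mul_of_nonneg_left hgap ht0
    rw [mul_div_right_comm, ← ht]
    simp only [Prod.fst_add, Prod.smul_fst, smul_eq_mul]
    linarith
end

section
/- Let λ, v, ε, τ be nonnegative reals and define λ' = max(0, λ + v + ε − τ). Then λ·(τ − ε − v) ≤ (λ² − (λ')²)/2 + (λ' − λ)²/2 + τ². -/
/-- Per-episode inequality in the proof of Lemma 5.6: under the dual update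
`λ' = max(0, λ + v + ε − τ)`, the product `λ(τ − ε − v)` is controlled by a telescoping
quadratic term, a squared-increment term, and `τ²`. -/
theorem dual_update_product_bound
    (lam v ε τ : ℝ) (hlam : 0 ≤ lam) (hv : 0 ≤ v) (hε : 0 ≤ ε) (hτ : 0 ≤ τ) :
    lam * (τ - ε - v) ≤
      (lam ^ 2 - (max 0 (lam + v + ε - τ)) ^ 2) / 2 +
        (max 0 (lam + v + ε - τ) - lam) ^ 2 / 2 + τ ^ 2 := by
  rcases le_total 0 (lam + v + ε - τ) with h | h
  · rw [max_eq_right h]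
    nlinarith [sq_nonneg τ]
  · -- The update is truncated at `0`, so `lam ≤ τ - ε - v ≤ τ` and the product is at most `τ ^ 2`.
    rw [max_eq_left h]
    have hprod : lam * (τ - ε - v) ≤ τ * τ :=
      mul_le_mul (by linarith) (by linarith) (by linarith) hτ
    nlinarith [sq_nonneg lam]
end

section
/- Let H > 0 and τ be a real with 0 < τ ≤ H, and let m ≤ K be natural numbers with m ≥ 1. Let (v_k)_{k=m}^{K} and (ε_k)_{k=m}^{K} be reals with 0 ≤ v_k ≤ H and 0 ≤ ε_k ≤ τ, let (η_k)_{k=m}^{K} be a nondecreasing sequence of positive reals, let λ_m ≥ 0 and define λ_{k+1} = max(0, λ_k + v_k + ε_k − τ) for m ≤ k ≤ K. Let (g_k)_{k=m}^{K} be reals with g_k ≤ (λ_k/η_k)·(τ − ε_k − v_k) for each k. Then Σ_{k=m}^{K} g_k ≤ λ_m²/(2η_m) + (3H²/2)·Σ_{k=m}^{K} 1/η_k. -/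
/-!
The proof is a drift argument with potential `λ_k² / (2 η_k)`. Projection onto `[0, ∞)` does not
increase squares, so `λ_{k+1}² ≤ (λ_k + x_k)²` with `x_k = v_k + ε_k − τ` and `|x_k| ≤ H`;
expanding gives `−λ_k x_k ≤ (λ_k² − λ_{k+1}²) / 2 + H² / 2`. Dividing by `η_k` bounds `g_k`, and
since `η` is nondecreasing the potentials telescope.
-/

open Finset

/-- Deterministic core of Lemma 5.6: per-episode gaps `g_k ≤ (λ_k/η_k)(τ − ε_k − v_k)`,
with the dual update `λ_{k+1} = max(0, λ_k + v_k + ε_k − τ)`, bounded values, and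
nondecreasing positive dual step sizes `η_k`, sum to at most
`λ_m²/(2η_m) + (3H²/2)·Σ 1/η_k`. -/
theorem optimality_gap_sum_bound
    (H τ : ℝ) (hH : 0 < H) (hτ0 : 0 < τ) (hτH : τ ≤ H)
    (m K : ℕ) (hm : 1 ≤ m) (hmK : m ≤ K)
    (v ε : ℕ → ℝ) (hv : ∀ k, m ≤ k → k ≤ K → 0 ≤ v k ∧ v k ≤ H)
    (hε : ∀ k, m ≤ k → k ≤ K → 0 ≤ ε k ∧ ε k ≤ τ)
    (η : ℕ → ℝ) (hηpos : ∀ k, m ≤ k → k ≤ K → 0 < η k)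
    (hηmono : ∀ j k, m ≤ j → j ≤ k → k ≤ K → η j ≤ η k)
    (lam : ℕ → ℝ) (hlamm : 0 ≤ lam m)
    (hrec : ∀ k, m ≤ k → k ≤ K → lam (k + 1) = max 0 (lam k + v k + ε k - τ))
    (g : ℕ → ℝ) (hg : ∀ k, m ≤ k → k ≤ K → g k ≤ lam k / η k * (τ - ε k - v k)) :
    ∑ k ∈ Finset.Icc m K, g k ≤
      lam m ^ 2 / (2 * η m) + 3 * H ^ 2 / 2 * ∑ k ∈ Finset.Icc m K, 1 / η k := by
  have step : ∀ k, m ≤ k → k ≤ K →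
      g k + lam (k + 1) ^ 2 / (2 * η k) ≤ lam k ^ 2 / (2 * η k) + 3 * H ^ 2 / 2 * (1 / η k) := by
    intro k h1 h2
    obtain ⟨hv0, hvH⟩ := hv k h1 h2
    obtain ⟨he0, heτ⟩ := hε k h1 h2
    have hη := hηpos k h1 h2
    have hsq : lam (k + 1) ^ 2 ≤ (lam k + v k + ε k - τ) ^ 2 := by
      rw [hrec k h1 h2]
      rcases max_cases 0 (lam k + v k + ε k - τ) with ⟨h, _⟩ | ⟨h, _⟩ <;> rw [h]
      nlinarith [sq_nonneg (lam k + v k + ε k - τ)]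
    have hinc : (v k + ε k - τ) ^ 2 ≤ H ^ 2 := sq_le_sq' (by linarith) (by linarith)
    have hnum : lam k * (τ - ε k - v k) + lam (k + 1) ^ 2 / 2 ≤
        lam k ^ 2 / 2 + 3 * H ^ 2 / 2 := by
      nlinarith [sq_nonneg H]
    calc g k + lam (k + 1) ^ 2 / (2 * η k)
        ≤ lam k / η k * (τ - ε k - v k) + lam (k + 1) ^ 2 / (2 * η k) := by
          gcongr
          exact hg k h1 h2
      _ = (lam k * (τ - ε k - v k) + lam (k + 1) ^ 2 / 2) / η k := by field_simp
      _ ≤ (lam k ^ 2 / 2 + 3 * H ^ 2 / 2) / η k := by gcongr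
      _ = lam k ^ 2 / (2 * η k) + 3 * H ^ 2 / 2 * (1 / η k) := by field_simp
  -- The telescoped bound, keeping the potential of the last dual variable on the left.
  have key : ∀ n, m ≤ n → n ≤ K →
      ∑ k ∈ Finset.Icc m n, g k + lam (n + 1) ^ 2 / (2 * η n) ≤
        lam m ^ 2 / (2 * η m) + 3 * H ^ 2 / 2 * ∑ k ∈ Finset.Icc m n, 1 / η k := by
    intro n hn
    induction n, hn using Nat.le_induction with
    | base =>
      intro h
      simpa only [Finset.Icc_self, Finset.sum_singleton] using step m le_rfl h
    | succ n hn ih =>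
      intro h
      have hη := hηpos n hn (by omega)
      have hmono := hηmono n (n + 1) hn (by omega) h
      -- Monotonicity of `η` lets the potential pass from step size `η n` to `η (n + 1)`.
      have hpot : lam (n + 1) ^ 2 / (2 * η (n + 1)) ≤ lam (n + 1) ^ 2 / (2 * η n) := by
        gcongr
      have hs := step (n + 1) (by omega) h
      have hi := ih (by omega)
      rw [Finset.sum_Icc_succ_top (by omega), Finset.sum_Icc_succ_top (by omega), mul_add]
      linarith
  have hη := hηpos K hmK le_rfl
  have hlast : 0 ≤ lam (K + 1) ^ 2 / (2 * η K) := by positivity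
  linarith [key K hmK le_rfl]
end
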